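/- arXiv:2412.17233 — 2 statements merged into one kernel-verified Lean document; each statement's English description precedes it below -/
import Mathlib

section
/- For every t = (t_1,…,t_N) ∈ ℝ^N: if n is even then det(A(t)) = (t_1 t_2 ⋯ t_N)², and if n is odd then the determinant of the (n−1)×(n−1) submatrix of A(t) with rows and columns {1,…,n−1} equals (t_1 t_2 ⋯ t_N)². -/
noncomputable section

open Matrix

/-- `N = n(n-1)/2`, the number of parameters. -/
def Npar (n : ℕ) : ℕ := n * (n - 1) / 2

/-- The decreasing run `a, a-1, …, b` (empty if `b > a`). -/
def decRun (a b : ℕ) : List ℕ := (List.range' b (a + 1 - b)).reverse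

/-- The index sequence `(i_1, …, i_N)`: for `m = 1, …, ⌊n/2⌋` (here `m` is 0-based, so
`m+1` is the 1-based block index), concatenate `n`, the run `n-2, …, 2(m+1)-1`, and the
run `n-1, …, 2(m+1)`. -/
def wordD (n : ℕ) : List ℕ :=
  ((List.range (n / 2)).map (fun m =>
    n :: (decRun (n - 2) (2 * m + 1) ++ decRun (n - 1) (2 * m + 2)))).flatten

/-- The matrix `x_i(t)` (index `i` is 1-based, matrix positions are 1-based in the paper,
0-based here). -/
def xMat (n : ℕ) (i : ℕ) (t : ℝ) : Matrix (Fin (2 * n)) (Fin (2 * n)) ℝ :=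
  Matrix.of fun p q =>
    (if (p : ℕ) = (q : ℕ) then 1 else 0) +
    (if i < n then
        (if (p : ℕ) + 1 = i ∧ (q : ℕ) + 1 = i + 1 then t else 0)
      + (if (p : ℕ) + 1 = n + i + 1 ∧ (q : ℕ) + 1 = n + i then -t else 0)
     else
        (if (p : ℕ) + 1 = n - 1 ∧ (q : ℕ) + 1 = 2 * n then t else 0)
      + (if (p : ℕ) + 1 = n ∧ (q : ℕ) + 1 = 2 * n - 1 then -t else 0))

/-- The product `x_{i_1}(t_1) ⋯ x_{i_N}(t_N)`; the parameter `t l` plays the role of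
`t_{l+1}`. -/
def prodX (n : ℕ) (t : ℕ → ℝ) : Matrix (Fin (2 * n)) (Fin (2 * n)) ℝ :=
  ((List.range (Npar n)).map (fun l => xMat n ((wordD n).getD l 0) (t l))).prod

/-- The first block `X₁(t)` of the first `n` rows of the product. -/
def X1 (n : ℕ) (t : ℕ → ℝ) : Matrix (Fin n) (Fin n) ℝ :=
  Matrix.of fun p q =>
    prodX n t ⟨(p : ℕ), by have := p.isLt; omega⟩ ⟨(q : ℕ), by have := q.isLt; omega⟩

/-- The second block `X₂(t)` of the first `n` rows of the product. -/
def X2 (n : ℕ) (t : ℕ → ℝ) : Matrix (Fin n) (Fin n) ℝ :=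
  Matrix.of fun p q =>
    prodX n t ⟨(p : ℕ), by have := p.isLt; omega⟩ ⟨n + (q : ℕ), by have := q.isLt; omega⟩

/-- The skew-symmetric matrix `A(t) = X₁(t)⁻¹ · X₂(t)`. -/
def Amat (n : ℕ) (t : ℕ → ℝ) : Matrix (Fin n) (Fin n) ℝ := (X1 n t)⁻¹ * X2 n t

/-- The set `S_n^{>0}` of totally positive skew-symmetric matrices. -/
def Spos (n : ℕ) : Set (Matrix (Fin n) (Fin n) ℝ) :=
  { A | ∃ t : ℕ → ℝ, (∀ i < Npar n, 0 < t i) ∧ A = Amat n t }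

/-- The signed minor `M_{j,k}(A)`: `(-1)^{jk}` times the determinant of the submatrix of `A`
with (1-based) rows `{1,…,n-k-1} ∪ {n-k+j,…,n}` and columns `{1,…,n-j}`. -/
def Mminor (n j k : ℕ) (A : Matrix (Fin n) (Fin n) ℝ) : ℝ :=
  (-1 : ℝ) ^ (j * k) *
    Matrix.det (Matrix.of fun (p q : Fin (n - j)) =>
      A (if (p : ℕ) < n - k - 1
          then ⟨(p : ℕ), by have := p.isLt; omega⟩
          else ⟨(p : ℕ) + j, by have := p.isLt; omega⟩)
        ⟨(q : ℕ), by have := q.isLt; omega⟩)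

/-- The Pfaffian of an `m × m` matrix (intended for `m` even):
`Pf(B) = (1/(2^{m/2} (m/2)!)) Σ_σ sgn(σ) Π_i B_{σ(2i-1), σ(2i)}`. -/
def Pfaff {m : ℕ} (B : Matrix (Fin m) (Fin m) ℝ) : ℝ :=
  (1 / ((2 : ℝ) ^ (m / 2) * (Nat.factorial (m / 2) : ℝ))) *
    ∑ σ : Equiv.Perm (Fin m), ((Equiv.Perm.sign σ : ℤ) : ℝ) *
      ∏ i : Fin (m / 2),
        B (σ ⟨2 * (i : ℕ), by have := i.isLt; omega⟩)
          (σ ⟨2 * (i : ℕ) + 1, by have := i.isLt; omega⟩)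

/-- `Pf_I(A)`: the Pfaffian of the submatrix of `A` with rows and columns indexed by `I`
in increasing order. -/
def PfI {n : ℕ} (A : Matrix (Fin n) (Fin n) ℝ) (I : Finset (Fin n)) : ℝ :=
  Pfaff (Matrix.of fun (p q : Fin I.card) =>
    A ((I.orderIsoOfFin rfl p : Fin n)) ((I.orderIsoOfFin rfl q : Fin n)))

/-- `sgn(I,[n]) = (-1)^{(Σ_{i∈I} i) - |I|(|I|+1)/2}` (the elements of `I` are 1-based, so a
0-based element `i` contributes `i+1`; the natural subtraction agrees with the integer one
since the sum of `|I|` distinct positive integers is at least `|I|(|I|+1)/2`). -/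
def sgnSet {n : ℕ} (I : Finset (Fin n)) : ℝ :=
  (-1 : ℝ) ^ ((∑ i ∈ I, ((i : ℕ) + 1)) - I.card * (I.card + 1) / 2)

/-- The block matrix `[Id_n | A]`. -/
def IdA {n : ℕ} (A : Matrix (Fin n) (Fin n) ℝ) : Matrix (Fin n) (Fin (2 * n)) ℝ :=
  Matrix.of fun p q =>
    if h : (q : ℕ) < n then (if (p : ℕ) = (q : ℕ) then 1 else 0)
    else A p ⟨(q : ℕ) - n, by have := q.isLt; omega⟩

/-- The full word `(j_1, …, j_{2N})`: `1, 2,1, 3,2,1, …, n-1,…,1` followed by `(i_1,…,i_N)`. -/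
def wordFull (n : ℕ) : List ℕ :=
  (((List.range n).map (fun r => decRun r 1)).flatten) ++ wordD n

/-- `z(ε) = x_{j_1}(ε) ⋯ x_{j_{2N}}(ε)`. -/
def zeps (n : ℕ) (ε : ℝ) : Matrix (Fin (2 * n)) (Fin (2 * n)) ℝ :=
  ((wordFull n).map (fun i => xMat n i ε)).prod

/-- `Z(ε) = z(ε)ᵀ · z(ε)`. -/
def Zeps (n : ℕ) (ε : ℝ) : Matrix (Fin (2 * n)) (Fin (2 * n)) ℝ :=
  (zeps n ε)ᵀ * zeps n ε

/-- First block `Y₁(ε)` of `[Id_n | A] · Z(ε)`. -/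
def Y1 {n : ℕ} (A : Matrix (Fin n) (Fin n) ℝ) (ε : ℝ) : Matrix (Fin n) (Fin n) ℝ :=
  Matrix.of fun p q => (IdA A * Zeps n ε) p ⟨(q : ℕ), by have := q.isLt; omega⟩

/-- Second block `Y₂(ε)` of `[Id_n | A] · Z(ε)`. -/
def Y2 {n : ℕ} (A : Matrix (Fin n) (Fin n) ℝ) (ε : ℝ) : Matrix (Fin n) (Fin n) ℝ :=
  Matrix.of fun p q => (IdA A * Zeps n ε) p ⟨n + (q : ℕ), by have := q.isLt; omega⟩

/-- The simple generators `s_i` of the Weyl group `W` of `SO(2n)`, as permutations of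
`{1,…,2n}` (0-based here): for `1 ≤ i ≤ n-1`, `s_i = (i,i+1)(n+i,n+i+1)`; for `i = n`,
`s_n = (n,2n-1)(n-1,2n)`. -/
def sGen (n : ℕ) (i : ℕ) : Equiv.Perm (Fin (2 * n)) :=
  if h : 1 ≤ i ∧ i ≤ n - 1 ∧ 2 ≤ n then
    Equiv.swap ⟨i - 1, by omega⟩ ⟨i, by omega⟩ *
      Equiv.swap ⟨n + i - 1, by omega⟩ ⟨n + i, by omega⟩
  else if h2 : i = n ∧ 2 ≤ n then
    Equiv.swap ⟨n - 1, by omega⟩ ⟨2 * n - 2, by omega⟩ *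
      Equiv.swap ⟨n - 2, by omega⟩ ⟨2 * n - 1, by omega⟩
  else 1

/-- Membership in the Weyl group `W`: `σ(n+i) ≡ n + σ(i) (mod 2n)` for all `1 ≤ i ≤ n`,
and the number of `i ∈ {1,…,n}` with `σ(i) > n` is even. (All positions are 0-based; a
0-based value `v` corresponds to the 1-based value `v+1`.) -/
def inW (n : ℕ) (σ : Equiv.Perm (Fin (2 * n))) : Prop :=
  (∀ i : Fin n,
    ((σ ⟨n + (i : ℕ), by have := i.isLt; omega⟩ : Fin (2 * n)) : ℕ)
      ≡ n + ((σ ⟨(i : ℕ), by have := i.isLt; omega⟩ : Fin (2 * n)) : ℕ) [MOD 2 * n]) ∧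
  Even (Finset.univ.filter (fun i : Fin n =>
    n ≤ ((σ ⟨(i : ℕ), by have := i.isLt; omega⟩ : Fin (2 * n)) : ℕ))).card

/-- `I_w = {i ∈ {1,…,n} : w(i) > n}`, as a finset of `Fin n` (0-based). -/
def Iset (n : ℕ) (σ : Equiv.Perm (Fin (2 * n))) : Finset (Fin n) :=
  Finset.univ.filter (fun i : Fin n =>
    n ≤ ((σ ⟨(i : ℕ), by have := i.isLt; omega⟩ : Fin (2 * n)) : ℕ))

/-- The parabolic subgroup `W_{[n-1]}` generated by `s_1, …, s_{n-1}`. -/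
def Wpar (n : ℕ) : Subgroup (Equiv.Perm (Fin (2 * n))) :=
  Subgroup.closure { σ | ∃ i, 1 ≤ i ∧ i ≤ n - 1 ∧ σ = sGen n i }

/-- The standard basis vector `e_i` of `ℝ^{2n}` (with `i : Fin n` 0-based, sitting in
position `i` of the first block). -/
def evec (n : ℕ) (i : Fin n) : Fin (2 * n) → ℝ :=
  Pi.single ⟨(i : ℕ), by have := i.isLt; omega⟩ 1

/-- The standard basis vector `f_j` of `ℝ^{2n}` (position `n + j`). -/
def fvec (n : ℕ) (j : Fin n) : Fin (2 * n) → ℝ :=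
  Pi.single ⟨n + (j : ℕ), by have := j.isLt; omega⟩ 1

/-- `f = ι(f_1)⋯ι(f_n)` in the Clifford algebra. -/
def fElt {n : ℕ} (Q : QuadraticForm ℝ (Fin (2 * n) → ℝ)) : CliffordAlgebra Q :=
  (List.ofFn (fun j : Fin n => CliffordAlgebra.ι Q (fvec n j))).prod

/-- `e_S = ι(e_{l_1})⋯ι(e_{l_s})` where `l_1 < ⋯ < l_s` enumerates `S`. -/
def eProd {n : ℕ} (Q : QuadraticForm ℝ (Fin (2 * n) → ℝ)) (S : Finset (Fin n)) :
    CliffordAlgebra Q :=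
  ((S.sort (· ≤ ·)).map (fun l => CliffordAlgebra.ι Q (evec n l))).prod

/-- `h = Π_{i=1}^n ι(e_i + Σ_j A_{ij} f_j)` (product in increasing order of `i`). -/
def hElt {n : ℕ} (Q : QuadraticForm ℝ (Fin (2 * n) → ℝ)) (A : Matrix (Fin n) (Fin n) ℝ) :
    CliffordAlgebra Q :=
  (List.ofFn (fun i : Fin n =>
    CliffordAlgebra.ι Q (evec n i + ∑ j : Fin n, A i j • fvec n j))).prod

/-- The sorted list of the (1-based) elements of `S ⊆ {1,…,n}`. -/
def valsOf {n : ℕ} (S : Finset (Fin n)) : List ℕ :=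
  (S.sort (· ≤ ·)).map (fun i => (i : ℕ) + 1)

/-- The word `w_1 w_2 ⋯ w_r` where
`w_m = s_n (s_{n-2}⋯s_{i_{2m-1}}) (s_{n-1}⋯s_{i_{2m}})` and `vals` lists `i_1 < i_2 < ⋯`
(1-based); `m` is 0-based here. -/
def uWord (n r : ℕ) (vals : List ℕ) : List ℕ :=
  ((List.range r).map (fun m =>
    n :: (decRun (n - 2) (vals.getD (2 * m) 0) ++ decRun (n - 1) (vals.getD (2 * m + 1) 0)))).flatten

/-- The permutation `u = w_1 w_2 ⋯ w_r`. -/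
def uPerm (n r : ℕ) (vals : List ℕ) : Equiv.Perm (Fin (2 * n)) :=
  ((uWord n r vals).map (sGen n)).prod

/-- `L = r + Σ_{m=1}^{r} ((n-1-i_{2m-1}) + (n-i_{2m}))`. -/
def Lval (n r : ℕ) (vals : List ℕ) : ℕ :=
  r + ∑ m ∈ Finset.range r, ((n - 1 - vals.getD (2 * m) 0) + (n - vals.getD (2 * m + 1) 0))

/-!
In block form with respect to `ℝ^{2n} = ℝ^n ⊕ ℝ^n`, every product of the `x_i(t)` is
`[[Z⁻¹, Z⁻¹ S], [0, Zᵀ]]` with `S` skew-symmetric, so `A(t) = S`. Prepending a letter `i < n` leaves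
`S` alone and multiplies `Z` on the right by an elementary matrix; prepending `n` with parameter `c`
leaves `Z` alone and adds `c (u vᵀ - v uᵀ)` to `S`, where `u, v` are the last two columns of `Z`.

Each block of the word contains the letter `n` once, so it contributes one such rank-two term. For
the `m`-th block (blocks and rows counted from `0`) `u` is supported on the rows `≥ 2m` and `v` on
the rows `≥ 2m+1`, and their leading entries are, up to sign, the products of the parameters of the
two decreasing runs of the block. The later blocks only contribute to rows and columns `≥ 2m+2`.
Splitting off the first two rows and columns therefore multiplies the determinant by
`(c u_{2m} v_{2m+1})²`, the squared product of the parameters of the block.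
-/

section CommRing

lemma prod_map_neg_sq {R : Type*} [CommRing R] (l : List R) :
    (l.map Neg.neg).prod ^ 2 = l.prod ^ 2 := by
  rw [List.prod_map_neg, mul_pow, ← pow_mul, mul_comm _ 2, pow_mul, neg_one_sq, one_pow, one_mul]

variable {R κ : Type*} [CommRing R] [Fintype κ] [DecidableEq κ]

lemma mul_row_eq_of_row_eq_one {μ : Type*} {Z : Matrix κ κ R} {p : κ}
    (hZ : Z p = (1 : Matrix κ κ R) p) (M : Matrix κ μ R) : (Z * M) p = M p := by
  rw [mul_apply_eq_vecMul, hZ, ← mul_apply_eq_vecMul, Matrix.one_mul]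

-- The matrix is `P * fromBlocks J 0 0 S * Pᵀ`, where `P` has first two columns `u, v`.
lemma det_vecMulVec_sub_vecMulVec_add_fromBlocks (u v : Fin 2 ⊕ κ → R) (hv : v (Sum.inl 0) = 0)
    (S : Matrix κ κ R) :
    (vecMulVec u v - vecMulVec v u + fromBlocks 0 0 0 S).det =
      (u (Sum.inl 0) * v (Sum.inl 1)) ^ 2 * S.det := by
  let P : Matrix (Fin 2 ⊕ κ) (Fin 2 ⊕ κ) R :=
    fromBlocks !![u (Sum.inl 0), 0; u (Sum.inl 1), v (Sum.inl 1)] 0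
      (Matrix.of fun p => ![u (Sum.inr p), v (Sum.inr p)]) 1
  have hP : P.det = u (Sum.inl 0) * v (Sum.inl 1) := by
    simp [P, det_fin_two]
  have hfactor : vecMulVec u v - vecMulVec v u + fromBlocks 0 0 0 S =
      P * fromBlocks !![0, 1; -1, 0] 0 0 S * Pᵀ := by
    simp only [P, fromBlocks_transpose, fromBlocks_multiply]
    ext (p | p) (q | q)
    · fin_cases p <;> fin_cases q <;> simp [vecMulVec_apply, vecMul, hv, mul_comm, sub_eq_neg_add]
    · fin_cases p <;> simp [vecMulVec_apply, vecMul, hv, mul_comm, sub_eq_neg_add]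
    · fin_cases q <;> simp [vecMulVec_apply, Matrix.mul_apply, hv, mul_comm, sub_eq_neg_add]
    · simp [vecMulVec_apply, Matrix.mul_apply, mul_comm, sub_eq_neg_add]
  rw [hfactor, det_mul, det_mul, det_transpose, hP, det_fromBlocks_zero₂₁]
  simp only [det_fin_two_of]
  ring

end CommRing

section SiegelParabolic

variable {ι R : Type*} [Fintype ι] [DecidableEq ι] [CommRing R]

/-- The element of the Siegel parabolic subgroup (the stabilizer of a maximal isotropic subspace)
with inverse Levi part `Z` and unipotent part `S`. Parametrizing by the inverse of the upper left
block makes multiplication polynomial in `Z` and `S`. -/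
def siegelMatrix (Z S : Matrix ι ι R) : Matrix (ι ⊕ ι) (ι ⊕ ι) R :=
  fromBlocks Z⁻¹ (Z⁻¹ * S) 0 Zᵀ

lemma siegelMatrix_one_zero : siegelMatrix (1 : Matrix ι ι R) 0 = 1 := by
  simp [siegelMatrix, fromBlocks_one]

lemma siegelMatrix_mul_siegelMatrix (Z S Z' S' : Matrix ι ι R) (hZ' : IsUnit Z'.det) :
    siegelMatrix Z S * siegelMatrix Z' S' = siegelMatrix (Z' * Z) (S' + Z' * S * Z'ᵀ) := by
  simp only [siegelMatrix, fromBlocks_multiply, Matrix.mul_inv_rev, transpose_mul, Matrix.mul_add,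
    Matrix.mul_assoc, nonsing_inv_mul_cancel_left _ _ hZ', Matrix.mul_zero, Matrix.zero_mul,
    add_zero, zero_add]

end SiegelParabolic

section ElementaryMatrices

variable {R : Type*} [CommRing R] {n : ℕ}

/-- The elementary matrix `1 + c E_{i,i+1}` of size `n` (`i` is 1-based). It is the identity unless
`1 ≤ i < n`; in particular the letter `n` acts trivially. -/
def simpleElementary (n i : ℕ) (c : R) : Matrix (Fin n) (Fin n) R :=
  1 + Matrix.of fun p q : Fin n => if (p : ℕ) + 1 = i ∧ (q : ℕ) = i then c else 0

lemma simpleElementary_apply (i : ℕ) (c : R) (p q : Fin n) :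
    simpleElementary n i c p q =
      (if (p : ℕ) = q then 1 else 0) + if (p : ℕ) + 1 = i ∧ (q : ℕ) = i then c else 0 := by
  simp [simpleElementary, Matrix.one_apply, Fin.ext_iff]

lemma simpleElementary_row_of_ne {i : ℕ} (c : R) {p : Fin n} (hp : (p : ℕ) + 1 ≠ i) :
    simpleElementary n i c p = (1 : Matrix (Fin n) (Fin n) R) p := by
  ext q
  simp [simpleElementary, hp]

lemma simpleElementary_self (c : R) : simpleElementary n n c = 1 := by
  ext p q
  simp [simpleElementary, q.isLt.ne]

lemma mul_simpleElementary_apply_of_ne (M : Matrix (Fin n) (Fin n) R) {i : ℕ} (c : R)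
    (p : Fin n) {q : Fin n} (hq : (q : ℕ) ≠ i) : (M * simpleElementary n i c) p q = M p q := by
  rw [simpleElementary, Matrix.mul_add, Matrix.mul_one, Matrix.add_apply, Matrix.mul_apply]
  simp [hq]

lemma mul_simpleElementary_apply_self (M : Matrix (Fin n) (Fin n) R) (c : R) (p : Fin n)
    {a q : Fin n} (haq : (a : ℕ) + 1 = q) :
    (M * simpleElementary n q c) p q = M p q + M p a * c := by
  have hpred : ∀ x : Fin n, (x : ℕ) + 1 = q ↔ x = a := fun x => by rw [Fin.ext_iff]; omega
  rw [simpleElementary, Matrix.mul_add, Matrix.mul_one, Matrix.add_apply, Matrix.mul_apply]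
  simp [hpred]

lemma simpleElementary_mul_neg (i : ℕ) (c : R) :
    simpleElementary n i c * simpleElementary n i (-c) = 1 := by
  let E : Matrix (Fin n) (Fin n) R :=
    Matrix.of fun p q => if (p : ℕ) + 1 = i ∧ (q : ℕ) = i then c else 0
  have hneg : simpleElementary n i (-c) = 1 - E := by
    ext p q
    by_cases hpq : (p : ℕ) + 1 = i ∧ (q : ℕ) = i <;> simp [simpleElementary, E, hpq, sub_eq_add_neg]
  have hsq : E * E = 0 := by
    ext p q
    rw [Matrix.mul_apply]
    refine Finset.sum_eq_zero fun x _ => ?_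
    by_cases hx : (x : ℕ) = i <;> simp [E, hx]
  calc simpleElementary n i c * simpleElementary n i (-c)
    _ = (1 + E) * (1 - E) := by rw [hneg]; rfl
    _ = 1 - E * E := by noncomm_ring
    _ = 1 := by rw [hsq, sub_zero]

lemma inv_simpleElementary_neg (i : ℕ) (c : R) :
    (simpleElementary n i (-c))⁻¹ = simpleElementary n i c :=
  inv_eq_left_inv (simpleElementary_mul_neg i c)

lemma det_simpleElementary (i : ℕ) (c : R) : (simpleElementary n i c).det = 1 := by
  have hupper : (simpleElementary n i c).BlockTriangular id := by
    intro p q hqp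
    have hqp : (q : ℕ) < p := hqp
    rw [simpleElementary_apply, if_neg (by omega), if_neg (by omega), add_zero]
  rw [det_of_isUpperTriangular hupper]
  refine Finset.prod_eq_one fun p _ => ?_
  rw [simpleElementary_apply, if_pos rfl, if_neg (by omega), add_zero]

/-- The skew-symmetric matrix `E_{n-1,n} - E_{n,n-1}` of size `n` (1-based indices). -/
def cornerSkew (R : Type*) [CommRing R] (n : ℕ) : Matrix (Fin n) (Fin n) R :=
  Matrix.of fun p q =>
    (if (p : ℕ) + 2 = n ∧ (q : ℕ) + 1 = n then 1 else 0)
      - (if (p : ℕ) + 1 = n ∧ (q : ℕ) + 2 = n then 1 else 0)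

lemma transpose_cornerSkew : (cornerSkew R n)ᵀ = -cornerSkew R n := by
  ext p q
  simp [cornerSkew, and_comm]

lemma mul_cornerSkew_mul_transpose (Z : Matrix (Fin n) (Fin n) R) {a b : Fin n}
    (ha : (a : ℕ) + 2 = n) (hb : (b : ℕ) + 1 = n) :
    Z * cornerSkew R n * Zᵀ = vecMulVec (Z.col a) (Z.col b) - vecMulVec (Z.col b) (Z.col a) := by
  have hcorner : cornerSkew R n = Matrix.single a b 1 - Matrix.single b a 1 := by
    ext p q
    simp only [cornerSkew, Matrix.of_apply, Matrix.sub_apply, Matrix.single_apply, Fin.ext_iff]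
    congr 1 <;> congr 1 <;> apply propext <;> omega
  simp only [hcorner, Matrix.single_eq_single_vecMulVec_single, Matrix.mul_sub, Matrix.sub_mul,
    Matrix.mul_vecMulVec, Matrix.vecMulVec_mul, mulVec_single_one, single_one_vecMul]
  rfl

end ElementaryMatrices

section WeightedWords

variable {R : Type*} [CommRing R] {n : ℕ}

/-- The inverse of the upper left block of `x_{i_1}(c_1) ⋯ x_{i_k}(c_k)`, for the list of pairs
`(i_1, c_1), …, (i_k, c_k)`. -/
def leviInv (n : ℕ) : List (ℕ × R) → Matrix (Fin n) (Fin n) R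
  | [] => 1
  | (i, c) :: w => leviInv n w * simpleElementary n i (-c)

/-- The skew-symmetric matrix `S` such that `x_{i_1}(c_1) ⋯ x_{i_k}(c_k)` has upper blocks
`[Y | Y S]`, for the list of pairs `(i_1, c_1), …, (i_k, c_k)`. -/
def skewPart (n : ℕ) : List (ℕ × R) → Matrix (Fin n) (Fin n) R
  | [] => 0
  | (i, c) :: w =>
    skewPart n w + leviInv n w * (if i = n then c • cornerSkew R n else 0) * (leviInv n w)ᵀ

lemma leviInv_append (w w' : List (ℕ × R)) :
    leviInv n (w ++ w') = leviInv n w' * leviInv n w := by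
  induction w with
  | nil => simp [leviInv]
  | cons x w ih => simp only [List.cons_append, leviInv, ih, Matrix.mul_assoc]

lemma det_leviInv (w : List (ℕ × R)) : (leviInv n w).det = 1 := by
  induction w with
  | nil => simp [leviInv]
  | cons x w ih => rw [leviInv, det_mul, ih, det_simpleElementary, one_mul]

lemma transpose_skewPart (w : List (ℕ × R)) : (skewPart n w)ᵀ = -skewPart n w := by
  induction w with
  | nil => simp [skewPart]
  | cons x w ih =>
    simp only [skewPart, transpose_add, ih, transpose_mul, transpose_transpose]
    split_ifs <;> simp [transpose_cornerSkew, Matrix.mul_assoc, add_comm]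

lemma skewPart_append_of_forall_ne {w : List (ℕ × R)} (hw : ∀ x ∈ w, x.1 ≠ n)
    (w' : List (ℕ × R)) : skewPart n (w ++ w') = skewPart n w' := by
  induction w with
  | nil => rfl
  | cons x w ih =>
    rw [List.forall_mem_cons] at hw
    simp [skewPart, ih hw.2, hw.1]

lemma leviInv_row_of_forall_lt {w : List (ℕ × R)} {p : Fin n}
    (hw : ∀ x ∈ w, (p : ℕ) + 1 < x.1) :
    leviInv n w p = (1 : Matrix (Fin n) (Fin n) R) p := by
  induction w with
  | nil => rfl
  | cons x w ih =>
    rw [List.forall_mem_cons] at hw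
    rw [leviInv, mul_row_eq_of_row_eq_one (ih hw.2), simpleElementary_row_of_ne _ hw.1.ne]

lemma leviInv_append_row_of_forall_lt (w : List (ℕ × R)) {w' : List (ℕ × R)} {p : Fin n}
    (hw' : ∀ x ∈ w', (p : ℕ) + 1 < x.1) : leviInv n (w ++ w') p = leviInv n w p := by
  rw [leviInv_append, mul_row_eq_of_row_eq_one (leviInv_row_of_forall_lt hw')]

lemma leviInv_append_apply_of_forall_lt {w : List (ℕ × R)} {q : Fin n}
    (hw : ∀ x ∈ w, x.1 < (q : ℕ)) (w' : List (ℕ × R)) (p : Fin n) :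
    leviInv n (w ++ w') p q = leviInv n w' p q := by
  induction w with
  | nil => rfl
  | cons x w ih =>
    rw [List.forall_mem_cons] at hw
    rw [List.cons_append, leviInv, mul_simpleElementary_apply_of_ne _ _ _ hw.1.ne', ih hw.2]

lemma leviInv_apply_of_forall_lt {w : List (ℕ × R)} {q : Fin n} (hw : ∀ x ∈ w, x.1 < (q : ℕ))
    (p : Fin n) : leviInv n w p q = (1 : Matrix (Fin n) (Fin n) R) p q := by
  simpa [leviInv] using leviInv_append_apply_of_forall_lt hw [] p

lemma skewPart_row_of_forall_lt {w : List (ℕ × R)} {p : Fin n} (hpn : (p : ℕ) + 2 < n)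
    (hw : ∀ x ∈ w, (p : ℕ) + 1 < x.1) : skewPart n w p = 0 := by
  induction w with
  | nil => rfl
  | cons x w ih =>
    rw [List.forall_mem_cons] at hw
    have hcorner : (if x.1 = n then x.2 • cornerSkew R n else 0) p = 0 := by
      ext q
      split_ifs
      · have hp : ¬(p : ℕ) + 1 = n := by omega
        simp [cornerSkew, hpn.ne, hp]
      · rfl
    have hterm : (leviInv n w * (if x.1 = n then x.2 • cornerSkew R n else 0) *
        (leviInv n w)ᵀ) p = 0 := by
      rw [Matrix.mul_assoc, mul_row_eq_of_row_eq_one (leviInv_row_of_forall_lt hw.2),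
        mul_apply_eq_vecMul, hcorner, zero_vecMul]
    ext q
    rw [skewPart, Matrix.add_apply, ih hw.2, hterm, Pi.zero_apply, add_zero]

lemma skewPart_apply_eq_zero_of_row_eq_zero {w : List (ℕ × R)} {q : Fin n}
    (hq : skewPart n w q = 0) (p : Fin n) : skewPart n w p q = 0 := by
  rw [← transpose_apply (skewPart n w), transpose_skewPart, Matrix.neg_apply, hq, Pi.zero_apply,
    neg_zero]

end WeightedWords

section DecreasingRuns

lemma mem_decRun {a b i : ℕ} : i ∈ decRun a b ↔ b ≤ i ∧ i ≤ a := by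
  simp only [decRun, List.mem_reverse, List.mem_range'_1]
  omega

lemma length_decRun (a b : ℕ) : (decRun a b).length = a + 1 - b := by
  simp [decRun]

lemma decRun_self_succ (a : ℕ) : decRun a (a + 1) = [] := by
  simp [decRun]

lemma decRun_succ {a b : ℕ} (hb : b ≤ a + 1) : decRun (a + 1) b = (a + 1) :: decRun a b := by
  rw [decRun, Nat.sub_add_comm hb, List.range'_1_concat, List.reverse_append, decRun]
  simp only [List.reverse_singleton, List.singleton_append, Nat.add_sub_cancel' hb]

lemma fst_mem_decRun {α : Type*} {a b : ℕ} {w : List (ℕ × α)} (hw : w.map Prod.fst = decRun a b)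
    {x : ℕ × α} (hx : x ∈ w) : b ≤ x.1 ∧ x.1 ≤ a :=
  mem_decRun.1 (hw ▸ List.mem_map_of_mem hx)

variable {R : Type*} [CommRing R] {n : ℕ}

lemma leviInv_decRun {p q : Fin n} (hpq : p ≤ q) {w : List (ℕ × R)}
    (hw : w.map Prod.fst = decRun q (p + 1)) :
    leviInv n w p q = ((w.map Prod.snd).map Neg.neg).prod := by
  obtain ⟨q, hq⟩ := q
  replace hpq : (p : ℕ) ≤ q := hpq
  induction q, hpq using Nat.le_induction generalizing w with
  | base =>
    obtain rfl : w = [] := by simpa [decRun_self_succ] using hw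
    simp [leviInv]
  | succ q hpq ih =>
    rw [decRun_succ (by omega), List.map_eq_cons_iff] at hw
    obtain ⟨⟨_, c⟩, w, rfl, rfl, hw⟩ := hw
    have hlt : ∀ x ∈ w, x.1 < q + 1 := fun x hx => Nat.lt_succ_of_le (fst_mem_decRun hw hx).2
    have hcol : leviInv n w p ⟨q + 1, hq⟩ = 0 := by
      rw [leviInv_apply_of_forall_lt hlt, Matrix.one_apply_ne]
      exact Fin.ne_of_val_ne (by simp only; omega)
    have hstep := mul_simpleElementary_apply_self (leviInv n w) (-c) p
      (a := ⟨q, by omega⟩) (q := ⟨q + 1, hq⟩) rfl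
    rw [leviInv, hstep, hcol, ih (by omega) hw, zero_add, List.map_cons, List.map_cons,
      List.prod_cons, mul_comm]

lemma leviInv_decRun_append_apply {p q : Fin n} (hpq : p ≤ q) {w w' : List (ℕ × R)}
    (hw : w.map Prod.fst = decRun q (p + 1)) (hw' : ∀ x ∈ w', (p : ℕ) + 1 < x.1) :
    leviInv n (w ++ w') p q = ((w.map Prod.snd).map Neg.neg).prod := by
  rw [leviInv_append_row_of_forall_lt _ hw', leviInv_decRun hpq hw]

lemma leviInv_decRun_append_apply_eq_zero {a : ℕ} {p q : Fin n} (hpq : p < q) (haq : a < q)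
    {w w' : List (ℕ × R)} (hw : w.map Prod.fst = decRun a (p + 1))
    (hw' : ∀ x ∈ w', (p : ℕ) + 1 < x.1) : leviInv n (w ++ w') p q = 0 := by
  have hlt : ∀ x ∈ w, x.1 < (q : ℕ) := fun x hx => (fst_mem_decRun hw hx).2.trans_lt haq
  rw [leviInv_append_row_of_forall_lt _ hw', leviInv_apply_of_forall_lt hlt,
    Matrix.one_apply_ne hpq.ne]

end DecreasingRuns

section Blocks

variable {R : Type*} [CommRing R] {n : ℕ}

/-- The `m`-th block of the word `wordD n`, with `m` counted from `0`. -/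
def blockWord (n m : ℕ) : List ℕ :=
  n :: (decRun (n - 2) (2 * m + 1) ++ decRun (n - 1) (2 * m + 2))

/-- The `k` consecutive blocks of `wordD n` starting with the `m`-th one. -/
def blocksFrom (n m k : ℕ) : List ℕ := ((List.range' m k).map (blockWord n)).flatten

lemma blocksFrom_succ (n m k : ℕ) :
    blocksFrom n m (k + 1) = blockWord n m ++ blocksFrom n (m + 1) k := by
  simp [blocksFrom, List.range'_succ]

lemma wordD_eq_blocksFrom (n : ℕ) : wordD n = blocksFrom n 0 (n / 2) := by
  rw [wordD, blocksFrom, List.range_eq_range']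
  rfl

lemma mem_blocksFrom {m k i : ℕ} (hmk : 2 * (m + k) ≤ n) (hi : i ∈ blocksFrom n m k) :
    2 * m + 1 ≤ i ∧ i ≤ n := by
  simp only [blocksFrom, blockWord, List.mem_flatten, List.mem_map, List.mem_range'_1] at hi
  obtain ⟨_, ⟨j, hj, rfl⟩, hi⟩ := hi
  simp only [List.mem_cons, List.mem_append, mem_decRun] at hi
  omega

lemma Npar_add_two (n : ℕ) : Npar (n + 2) = 2 * n + 1 + Npar n := by
  have hpascal := Nat.choose_succ_succ' (n + 1) 1
  have hpascal' := Nat.choose_succ_succ' n 1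
  simp only [Nat.choose_one_right, Nat.reduceAdd, Nat.add_assoc] at hpascal hpascal'
  rw [Npar, Npar, ← Nat.choose_two_right, ← Nat.choose_two_right]
  omega

lemma length_blocksFrom {m k : ℕ} (hmk : m + k = n / 2) :
    (blocksFrom n m k).length = Npar (n - 2 * m) := by
  induction k generalizing m with
  | zero =>
    have hsmall : n - 2 * m = 0 ∨ n - 2 * m = 1 := by omega
    rcases hsmall with h | h <;> simp [blocksFrom, Npar, h]
  | succ k ih =>
    obtain ⟨l, rfl⟩ : ∃ l, n = l + 2 + 2 * m := ⟨n - 2 - 2 * m, by omega⟩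
    rw [blocksFrom_succ, List.length_append, ih (by omega), Nat.add_sub_cancel, Npar_add_two,
      show l + 2 + 2 * m - 2 * (m + 1) = l by omega]
    simp only [blockWord, List.length_cons, List.length_append, length_decRun]
    omega

lemma length_wordD (n : ℕ) : (wordD n).length = Npar n := by
  rw [wordD_eq_blocksFrom, length_blocksFrom (zero_add _), Nat.mul_zero, Nat.sub_zero]

lemma skewPart_cons_self (c : R) (w : List (ℕ × R)) {a b : Fin n} (ha : (a : ℕ) + 2 = n)
    (hb : (b : ℕ) + 1 = n) :
    skewPart n ((n, c) :: w) =
      vecMulVec (c • (leviInv n w).col a) ((leviInv n w).col b) -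
        vecMulVec ((leviInv n w).col b) (c • (leviInv n w).col a) + skewPart n w := by
  rw [skewPart, if_pos rfl, Matrix.mul_smul, Matrix.smul_mul, mul_cornerSkew_mul_transpose _ ha hb,
    smul_sub, smul_vecMulVec, vecMulVec_smul, add_comm]

lemma det_submatrix_skewPart_cons_self {κ : Type*} [Fintype κ] [DecidableEq κ] (c : R)
    {w : List (ℕ × R)} {f : Fin 2 ⊕ κ → Fin n} {a b : Fin n} (ha : (a : ℕ) + 2 = n)
    (hb : (b : ℕ) + 1 = n) (hcorner : leviInv n w (f (Sum.inl 0)) b = 0)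
    (hrow : ∀ i, skewPart n w (f (Sum.inl i)) = 0) :
    ((skewPart n ((n, c) :: w)).submatrix f f).det =
      (c * leviInv n w (f (Sum.inl 0)) a * leviInv n w (f (Sum.inl 1)) b) ^ 2 *
        ((skewPart n w).submatrix (f ∘ Sum.inr) (f ∘ Sum.inr)).det := by
  have hblocks : (skewPart n w).submatrix f f =
      fromBlocks 0 0 0 ((skewPart n w).submatrix (f ∘ Sum.inr) (f ∘ Sum.inr)) := by
    ext (p | p) (q | q) <;> simp [hrow, skewPart_apply_eq_zero_of_row_eq_zero]
  let u : Fin 2 ⊕ κ → R := (c • (leviInv n w).col a) ∘ f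
  let v : Fin 2 ⊕ κ → R := (leviInv n w).col b ∘ f
  have hdecomp : (skewPart n ((n, c) :: w)).submatrix f f = vecMulVec u v - vecMulVec v u +
      fromBlocks 0 0 0 ((skewPart n w).submatrix (f ∘ Sum.inr) (f ∘ Sum.inr)) := by
    rw [skewPart_cons_self c w ha hb, ← hblocks]
    rfl
  rw [hdecomp, det_vecMulVec_sub_vecMulVec_add_fromBlocks u v hcorner]
  rfl

lemma det_submatrix_skewPart_block_append {κ : Type*} [Fintype κ] [DecidableEq κ] (c : R)
    {w₁ w₂ w' : List (ℕ × R)} {f : Fin 2 ⊕ κ → Fin n} {a b : Fin n} (ha : (a : ℕ) + 2 = n)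
    (hb : (b : ℕ) + 1 = n) (hfa : (f (Sum.inl 0) : ℕ) ≤ a)
    (hf : (f (Sum.inl 1) : ℕ) = f (Sum.inl 0) + 1)
    (hw₁ : w₁.map Prod.fst = decRun a (f (Sum.inl 0) + 1))
    (hw₂ : w₂.map Prod.fst = decRun b (f (Sum.inl 1) + 1))
    (hw' : ∀ x ∈ w', (f (Sum.inl 1) : ℕ) + 1 < x.1)
    (hrow : ∀ i, skewPart n w' (f (Sum.inl i)) = 0) :
    ((skewPart n ((n, c) :: (w₁ ++ w₂ ++ w'))).submatrix f f).det =
      (c * (w₁.map Prod.snd).prod * (w₂.map Prod.snd).prod) ^ 2 *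
        ((skewPart n w').submatrix (f ∘ Sum.inr) (f ∘ Sum.inr)).det := by
  have hmem₁ := fun x => fst_mem_decRun hw₁ (x := x)
  have hmem₂ := fun x => fst_mem_decRun hw₂ (x := x)
  have hlevi : ∀ x ∈ w₁ ++ w₂, x.1 ≠ n := by grind
  have hgt : ∀ x ∈ w₂ ++ w', (f (Sum.inl 0) : ℕ) + 1 < x.1 := by grind
  have hlt : ∀ x ∈ w₁, x.1 < (b : ℕ) := by grind
  have hu : leviInv n (w₁ ++ w₂ ++ w') (f (Sum.inl 0)) a =
      ((w₁.map Prod.snd).map Neg.neg).prod := by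
    rw [List.append_assoc, leviInv_decRun_append_apply hfa hw₁ hgt]
  have hv₀ : leviInv n (w₁ ++ w₂ ++ w') (f (Sum.inl 0)) b = 0 := by
    rw [List.append_assoc]
    exact leviInv_decRun_append_apply_eq_zero (Fin.lt_def.2 (by omega)) (by omega) hw₁ hgt
  have hv₁ : leviInv n (w₁ ++ w₂ ++ w') (f (Sum.inl 1)) b =
      ((w₂.map Prod.snd).map Neg.neg).prod := by
    rw [List.append_assoc, leviInv_append_apply_of_forall_lt hlt,
      leviInv_decRun_append_apply (Fin.le_def.2 (by omega)) hw₂ hw']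
  have htail : skewPart n (w₁ ++ w₂ ++ w') = skewPart n w' := skewPart_append_of_forall_ne hlevi w'
  rw [det_submatrix_skewPart_cons_self c ha hb hv₀ (by rwa [htail]), htail, hu, hv₁]
  simp only [mul_pow, prod_map_neg_sq]

lemma skewPart_row_of_map_fst_eq_blocksFrom {m k : ℕ} (hmk : 2 * (m + k) ≤ n)
    {w : List (ℕ × R)} (hw : w.map Prod.fst = blocksFrom n m k) {q : Fin n} (hq : (q : ℕ) < 2 * m) :
    skewPart n w q = 0 := by
  rcases Nat.eq_zero_or_pos k with rfl | hk
  · obtain rfl : w = [] := by simpa [blocksFrom] using hw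
    rfl
  · refine skewPart_row_of_forall_lt (by omega) fun x hx => ?_
    have hx := mem_blocksFrom hmk (hw ▸ List.mem_map_of_mem hx)
    omega

lemma exists_of_map_fst_eq_blocksFrom_succ {α : Type*} {m k : ℕ} {w : List (ℕ × α)}
    (hw : w.map Prod.fst = blocksFrom n m (k + 1)) :
    ∃ (c : α) (w₁ w₂ w' : List (ℕ × α)), w = (n, c) :: (w₁ ++ w₂ ++ w') ∧
      w₁.map Prod.fst = decRun (n - 2) (2 * m + 1) ∧
      w₂.map Prod.fst = decRun (n - 1) (2 * m + 2) ∧ w'.map Prod.fst = blocksFrom n (m + 1) k := by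
  rw [blocksFrom_succ, blockWord, List.cons_append, List.map_eq_cons_iff] at hw
  obtain ⟨⟨_, c⟩, w, rfl, rfl, hw⟩ := hw
  obtain ⟨_, w', rfl, hw, hw'⟩ := List.map_eq_append_iff.1 hw
  obtain ⟨w₁, w₂, rfl, hw₁, hw₂⟩ := List.map_eq_append_iff.1 hw
  exact ⟨c, w₁, w₂, w', rfl, hw₁, hw₂, hw'⟩

theorem det_submatrix_skewPart_of_map_fst_eq_blocksFrom {m k d : ℕ} (hmk : 2 * (m + k) ≤ n)
    {w : List (ℕ × R)} (hw : w.map Prod.fst = blocksFrom n m k) (hd : 2 * k = d)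
    {f : Fin d → Fin n} (hf : ∀ p, (f p : ℕ) = 2 * m + p) :
    ((skewPart n w).submatrix f f).det = (w.map Prod.snd).prod ^ 2 := by
  subst hd
  induction k generalizing m w with
  | zero =>
    obtain rfl : w = [] := by simpa [blocksFrom] using hw
    simp
  | succ k ih =>
    obtain ⟨c, w₁, w₂, w', rfl, hw₁, hw₂, hw'⟩ := exists_of_map_fst_eq_blocksFrom_succ hw
    let e : Fin 2 ⊕ Fin (2 * k) ≃ Fin (2 * (k + 1)) :=
      finSumFinEquiv.trans (finCongr (by omega))
    have hf_inl : ∀ i, (f (e (Sum.inl i)) : ℕ) = 2 * m + i := fun i => by simp [e, hf]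
    have hf_inr : ∀ p, (f (e (Sum.inr p)) : ℕ) = 2 * (m + 1) + p := fun p => by
      simp [e, hf, mul_add, add_assoc, add_comm]
    have hf₀ : (f (e (Sum.inl 0)) : ℕ) = 2 * m := hf_inl 0
    have hf₁ : (f (e (Sum.inl 1)) : ℕ) = 2 * m + 1 := hf_inl 1
    have hrow : ∀ i, skewPart n w' (f (e (Sum.inl i))) = 0 := fun i =>
      skewPart_row_of_map_fst_eq_blocksFrom (by omega) hw' (by rw [hf_inl]; omega)
    have hgt : ∀ x ∈ w', (f (e (Sum.inl 1)) : ℕ) + 1 < x.1 := fun x hx => by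
      have hx := mem_blocksFrom (by omega) (hw' ▸ List.mem_map_of_mem hx)
      omega
    have hblock := det_submatrix_skewPart_block_append (f := f ∘ e) (a := ⟨n - 2, by omega⟩)
      (b := ⟨n - 1, by omega⟩) (w₁ := w₁) (w₂ := w₂) c (Nat.sub_add_cancel (by omega))
      (Nat.sub_add_cancel (by omega)) (hf₀.trans_le (Nat.le_sub_of_add_le (by omega)))
      (by simp [hf₀, hf₁]) (by simp [hf₀, hw₁]) (by simp [hf₁, hw₂]) hgt hrow
    have htail := ih (by omega) hw' (f := f ∘ e ∘ Sum.inr) hf_inr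
    rw [← det_submatrix_equiv_self e, submatrix_submatrix, hblock, Function.comp_assoc, htail,
      ← mul_pow]
    simp [mul_assoc]

end Blocks

section BlockForm

variable {n : ℕ}

/-- The identification of `{1, …, 2n}` with two copies of `{1, …, n}`, along which `2n × 2n`
matrices are cut into four `n × n` blocks. -/
def blockEquiv (n : ℕ) : Fin n ⊕ Fin n ≃ Fin (2 * n) :=
  finSumFinEquiv.trans (finCongr (two_mul n).symm)

lemma val_blockEquiv_inl (p : Fin n) : (blockEquiv n (Sum.inl p) : ℕ) = p := by
  simp [blockEquiv]

lemma val_blockEquiv_inr (p : Fin n) : (blockEquiv n (Sum.inr p) : ℕ) = n + p := by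
  simp [blockEquiv, add_comm]

lemma xMat_submatrix_blockEquiv (hn : 2 ≤ n) {i : ℕ} (hi : 1 ≤ i) (hin : i ≤ n) (c : ℝ) :
    (xMat n i c).submatrix (blockEquiv n) (blockEquiv n) =
      siegelMatrix (simpleElementary n i (-c)) (if i = n then c • cornerSkew ℝ n else 0) := by
  rw [siegelMatrix, inv_simpleElementary_neg]
  rcases hin.lt_or_eq with hin | rfl
  · rw [if_neg hin.ne, Matrix.mul_zero]
    ext (p | p) (q | q) <;>
      simp only [xMat, submatrix_apply, of_apply, val_blockEquiv_inl, val_blockEquiv_inr,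
        fromBlocks_apply₁₁, fromBlocks_apply₁₂, fromBlocks_apply₂₁, fromBlocks_apply₂₂,
        transpose_apply, simpleElementary_apply, Matrix.zero_apply, if_pos hin] <;>
      grind
  · rw [if_pos rfl, simpleElementary_self, simpleElementary_self, Matrix.one_mul, transpose_one]
    ext (p | p) (q | q) <;>
      simp only [xMat, submatrix_apply, of_apply, val_blockEquiv_inl, val_blockEquiv_inr,
        fromBlocks_apply₁₁, fromBlocks_apply₁₂, fromBlocks_apply₂₁, fromBlocks_apply₂₂,
        Matrix.one_apply, Matrix.zero_apply, Matrix.smul_apply, cornerSkew, smul_eq_mul,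
        Fin.ext_iff, lt_irrefl, if_false] <;>
      grind

lemma prod_xMat_submatrix_blockEquiv (hn : 2 ≤ n) {w : List (ℕ × ℝ)}
    (hw : ∀ x ∈ w, 1 ≤ x.1 ∧ x.1 ≤ n) :
    (w.map fun x => xMat n x.1 x.2).prod.submatrix (blockEquiv n) (blockEquiv n) =
      siegelMatrix (leviInv n w) (skewPart n w) := by
  induction w with
  | nil => simp [leviInv, skewPart, siegelMatrix_one_zero]
  | cons x w ih =>
    rw [List.forall_mem_cons] at hw
    have hdet : IsUnit (leviInv n w).det := by simp [det_leviInv]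
    rw [List.map_cons, List.prod_cons, ← submatrix_mul_equiv _ _ _ (blockEquiv n) _, ih hw.2,
      xMat_submatrix_blockEquiv hn hw.1.1 hw.1.2, siegelMatrix_mul_siegelMatrix _ _ _ _ hdet]
    rfl

end BlockForm

section ParametrizedWord

variable {n : ℕ}

/-- The word `wordD n` with its letters paired with the parameters,
`(i_1, t_1), …, (i_N, t_N)`. -/
def paramWord (n : ℕ) (t : ℕ → ℝ) : List (ℕ × ℝ) :=
  (List.range (Npar n)).map fun l => ((wordD n).getD l 0, t l)

lemma map_fst_paramWord (t : ℕ → ℝ) :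
    (paramWord n t).map Prod.fst = blocksFrom n 0 (n / 2) := by
  rw [← wordD_eq_blocksFrom, paramWord, List.map_map]
  refine List.ext_getElem (by simp [length_wordD]) fun l _ hl => ?_
  simp [hl]

lemma prod_map_snd_paramWord (t : ℕ → ℝ) :
    ((paramWord n t).map Prod.snd).prod = ∏ i ∈ Finset.range (Npar n), t i := by
  rw [paramWord, List.map_map]
  rfl

lemma prodX_submatrix_blockEquiv (hn : 2 ≤ n) (t : ℕ → ℝ) :
    (prodX n t).submatrix (blockEquiv n) (blockEquiv n) =
      siegelMatrix (leviInv n (paramWord n t)) (skewPart n (paramWord n t)) := by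
  have hletters : ∀ x ∈ paramWord n t, 1 ≤ x.1 ∧ x.1 ≤ n := fun x hx => by
    have hx := mem_blocksFrom (by omega) (map_fst_paramWord t ▸ List.mem_map_of_mem hx)
    omega
  rw [← prod_xMat_submatrix_blockEquiv hn hletters, paramWord, List.map_map]
  rfl

theorem Amat_eq_skewPart (hn : 2 ≤ n) (t : ℕ → ℝ) : Amat n t = skewPart n (paramWord n t) := by
  have hblocks := prodX_submatrix_blockEquiv hn t
  have hX1 : X1 n t = (leviInv n (paramWord n t))⁻¹ := by
    ext p q
    refine Eq.trans ?_ (congrFun₂ hblocks (Sum.inl p) (Sum.inl q))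
    simp only [X1, of_apply, submatrix_apply]
    congr 1
  have hX2 : X2 n t = (leviInv n (paramWord n t))⁻¹ * skewPart n (paramWord n t) := by
    ext p q
    refine Eq.trans ?_ (congrFun₂ hblocks (Sum.inl p) (Sum.inr q))
    simp only [X2, of_apply, submatrix_apply]
    congr 1
  have hdet : IsUnit (leviInv n (paramWord n t)).det := by simp [det_leviInv]
  rw [Amat, hX1, hX2, nonsing_inv_nonsing_inv _ hdet, mul_nonsing_inv_cancel_left _ _ hdet]

end ParametrizedWord

/-- If `n` is even then `det(A(t)) = (t_1⋯t_N)²`; if `n` is odd then the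
leading principal `(n-1) × (n-1)` minor of `A(t)` equals `(t_1⋯t_N)²`. -/
theorem det_Amat_eq_square (n : ℕ) (hn : 2 ≤ n) (t : ℕ → ℝ) :
    (Even n → (Amat n t).det = (∏ i ∈ Finset.range (Npar n), t i) ^ 2) ∧
    (Odd n →
      (Matrix.of fun (p q : Fin (n - 1)) =>
        Amat n t ⟨(p : ℕ), by have := p.isLt; omega⟩
          ⟨(q : ℕ), by have := q.isLt; omega⟩).det
      = (∏ i ∈ Finset.range (Npar n), t i) ^ 2) := by
  rw [Amat_eq_skewPart hn, ← prod_map_snd_paramWord]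
  constructor
  · intro heven
    rw [← det_submatrix_skewPart_of_map_fst_eq_blocksFrom (by omega) (map_fst_paramWord t)
      (Nat.two_mul_div_two_of_even heven) (f := id) (by simp), submatrix_id_id]
  · intro hodd
    exact det_submatrix_skewPart_of_map_fst_eq_blocksFrom (by omega) (map_fst_paramWord t)
      (Nat.two_mul_odd_div_two (Nat.odd_iff.1 hodd)) (by simp)
end
end

section
/- Let A and B be n×n real skew-symmetric matrices such that M_{j,k}(A) = M_{j,k}(B) and M_{j,k}(A) ≠ 0 for all integers 1 ≤ j ≤ k ≤ n−1. Then A = B. In other words, the minors M_{j,k} fully determine a skew-symmetric matrix on which they are all nonzero. -/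
noncomputable section

open Matrix

/-!
Work with matrices on `ℕ` that vanish outside an initial `n × n` block. Let `a = A 0 1`, let `x` and
`y` be the first two columns below the second row, and let `C` be the Schur complement of the
leading `2 × 2` block, which is again alternating. The minor of size `m` on the first `m` columns
whose rows are the first `q` and the last `m - q` equals

* `a ^ 2` times the corresponding minor of `C` if `2 ≤ q`;
* `-a` times a bottom-left corner minor of `[x | C]` if `q = 1`;
* a bottom-left corner minor of `[x | y | C]` if `q = 0` and `m ≤ n - 2`;
* `-a` times a bottom-left corner minor of `[y | C]` if `q = 0` and `m = n - 1`.

The smallest minors determine `a`, induction determines `C`, and then the corner minors determine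
`x` entry by entry from the bottom up. For `q = 0` the same argument, applied to `[y | x | C]`,
determines `y` up to a multiple of `x`, and the minor of size `n - 1` fixes the multiple.
-/

section ConsCol

variable {R : Type*}

/-- The matrix `[z | M]` obtained by putting the column `z` in front of `M`. -/
def consCol (z : ℕ → R) (M : Matrix ℕ ℕ R) : Matrix ℕ ℕ R :=
  of fun i j => Nat.casesOn j (z i) (M i)

@[simp]
lemma consCol_apply_zero (z : ℕ → R) (M : Matrix ℕ ℕ R) (i : ℕ) : consCol z M i 0 = z i := rfl

@[simp]
lemma consCol_apply_succ (z : ℕ → R) (M : Matrix ℕ ℕ R) (i j : ℕ) :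
    consCol z M i (j + 1) = M i j := rfl

@[simp]
lemma consCol_submatrix (z : ℕ → R) (M : Matrix ℕ ℕ R) (r : ℕ → ℕ) :
    (consCol z M).submatrix r id = consCol (z ∘ r) (M.submatrix r id) := by
  ext i (_ | j) <;> rfl

end ConsCol

section LeadingMinor

variable {R : Type*} [CommRing R]

/-- The determinant of the upper-left `m × m` block. Infinite matrices let minors of all sizes be
compared without transporting along equalities of dimensions. -/
def leadingMinor (m : ℕ) (M : Matrix ℕ ℕ R) : R :=
  (M.submatrix ((↑) : Fin m → ℕ) (↑)).det

@[simp]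
lemma leadingMinor_zero (M : Matrix ℕ ℕ R) : leadingMinor 0 M = 1 := det_isEmpty

@[simp]
lemma leadingMinor_one (M : Matrix ℕ ℕ R) : leadingMinor 1 M = M 0 0 := det_unique _

lemma leadingMinor_succ_consCol (m : ℕ) (z : ℕ → R) (M : Matrix ℕ ℕ R) :
    leadingMinor (m + 1) (consCol z M) = ∑ i : Fin (m + 1), (-1) ^ (i : ℕ) * z i *
      (M.submatrix (fun k : Fin m => (i.succAbove k : ℕ)) (↑)).det :=
  det_succ_column_zero _

lemma leadingMinor_consCol_add_smul (m : ℕ) (z w : ℕ → R) (c : R) (M : Matrix ℕ ℕ R) :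
    leadingMinor (m + 1) (consCol (z + c • w) M) =
      leadingMinor (m + 1) (consCol z M) + c * leadingMinor (m + 1) (consCol w M) := by
  simp only [leadingMinor_succ_consCol, Finset.mul_sum, ← Finset.sum_add_distrib]
  refine Finset.sum_congr rfl fun i _ => ?_
  simp only [Pi.add_apply, Pi.smul_apply, smul_eq_mul]
  ring

lemma leadingMinor_consCol_of_col_eq_zero (m : ℕ) {z : ℕ → R} (hz : ∀ i, z (i + 1) = 0)
    (M : Matrix ℕ ℕ R) :
    leadingMinor (m + 1) (consCol z M) = z 0 * leadingMinor m (M.submatrix (· + 1) id) := by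
  rw [leadingMinor_succ_consCol, Fin.sum_univ_succ, Finset.sum_eq_zero]
  · simp [leadingMinor, submatrix]
  · simp [hz]

lemma leadingMinor_consCol_of_row_eq_zero (m : ℕ) (z : ℕ → R) {M : Matrix ℕ ℕ R}
    (hM : ∀ j, M 0 j = 0) :
    leadingMinor (m + 1) (consCol z M) = z 0 * leadingMinor m (M.submatrix (· + 1) id) := by
  rw [leadingMinor, det_succ_row_zero, Fin.sum_univ_succ, Finset.sum_eq_zero]
  · simp [leadingMinor, submatrix]
  · simp [hM]

lemma leadingMinor_consCol_swap (m : ℕ) (x y : ℕ → R) (M : Matrix ℕ ℕ R) :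
    leadingMinor (m + 2) (consCol x (consCol y M)) =
      -leadingMinor (m + 2) (consCol y (consCol x M)) := by
  have hperm := det_permute' (Equiv.swap (0 : Fin (m + 2)) 1)
    ((consCol y (consCol x M)).submatrix (↑) (↑))
  rw [Equiv.Perm.sign_swap zero_ne_one, Units.val_neg, Units.val_one, Int.cast_neg, Int.cast_one,
    neg_one_mul] at hperm
  rw [leadingMinor, leadingMinor, ← hperm]
  congr 1
  ext i j
  refine Fin.cases (by simp) (Fin.cases (by simp) fun j => ?_) j
  have hj : j.succ.succ ≠ 1 := (Fin.succ_injective _).ne (Fin.succ_ne_zero j)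
  simp [Equiv.swap_apply_of_ne_of_ne (Fin.succ_ne_zero _) hj]

lemma leadingMinor_consCol_add_vecMulVec (m : ℕ) (x u : ℕ → R) (M : Matrix ℕ ℕ R) :
    leadingMinor m (consCol x (M + vecMulVec x u)) = leadingMinor m (consCol x M) := by
  cases m with
  | zero => simp
  | succ m =>
    rw [leadingMinor, leadingMinor, ← det_transpose, ← det_transpose (submatrix _ _ _)]
    refine det_eq_of_forall_row_eq_smul_add_const (Fin.cons 0 fun j => u j) 0 rfl fun j i => ?_
    refine Fin.cases (by simp) (fun j => ?_) j
    simp [vecMulVec_apply, mul_comm]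

lemma leadingMinor_consCol_consCol_add_vecMulVec (m : ℕ) (x y u v : ℕ → R) (M : Matrix ℕ ℕ R) :
    leadingMinor m (consCol x (consCol y (M + vecMulVec x u + vecMulVec y v))) =
      leadingMinor m (consCol x (consCol y M)) := by
  match m with
  | 0 => simp
  | 1 => simp
  | m + 2 =>
    have hx : consCol y (M + vecMulVec x u) =
        consCol y M + vecMulVec x (fun j => Nat.casesOn j 0 u) := by
      ext i (_ | j) <;> simp [vecMulVec_apply]
    have hy : consCol x (M + vecMulVec x u + vecMulVec y v) =
        consCol x (M + vecMulVec x u) + vecMulVec y (fun j => Nat.casesOn j 0 v) := by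
      ext i (_ | j) <;> simp [vecMulVec_apply]
    rw [leadingMinor_consCol_swap, hy, leadingMinor_consCol_add_vecMulVec,
      leadingMinor_consCol_swap, neg_neg, hx, leadingMinor_consCol_add_vecMulVec]

lemma leadingMinor_consCol_consCol_add_smul (m : ℕ) (x y : ℕ → R) (c : R) (M : Matrix ℕ ℕ R) :
    leadingMinor (m + 2) (consCol (y + c • x) (consCol x M)) =
      leadingMinor (m + 2) (consCol y (consCol x M)) := by
  have hadd : consCol (y + c • x) M = consCol y M + vecMulVec x (Pi.single 0 c) := by
    ext i (_ | j) <;> simp [vecMulVec_apply, mul_comm]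
  rw [leadingMinor_consCol_swap, hadd, leadingMinor_consCol_add_vecMulVec,
    leadingMinor_consCol_swap, neg_neg]

end LeadingMinor

section GapMinor

variable {R : Type*} [CommRing R]

/-- The increasing enumeration of the rows that remain after deleting `q, …, q + d - 1`. -/
def gapRow (q d i : ℕ) : ℕ := if i < q then i else i + d

/-- The minor of size `m` on the first `m` columns and the first `m` rows outside the gap
`q, …, q + d - 1`. In an `(m + d) × (m + d)` matrix these are the first `q` and the last `m - q`
rows; for `q = 0` it is the bottom-left corner minor. -/
def gapMinor (m q d : ℕ) (M : Matrix ℕ ℕ R) : R :=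
  leadingMinor m (M.submatrix (gapRow q d) id)

lemma gapRow_zero_left (d : ℕ) : gapRow 0 d = (· + d) := by
  ext i; simp [gapRow]

lemma gapRow_succ_zero (q d : ℕ) : gapRow (q + 1) d 0 = 0 := by simp [gapRow]

lemma gapRow_succ_succ (q d i : ℕ) : gapRow (q + 1) d (i + 1) = gapRow q d i + 1 := by
  unfold gapRow; split_ifs <;> omega

lemma gapMinor_one_zero (d : ℕ) (M : Matrix ℕ ℕ R) : gapMinor 1 0 d M = M d 0 := by
  simp [gapMinor, gapRow_zero_left]

lemma gapMinor_two_one {M : Matrix ℕ ℕ R} (hM : M 0 0 = 0) (d : ℕ) :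
    gapMinor 2 1 d M = -(M 0 1 * M (d + 1) 0) := by
  simp [gapMinor, leadingMinor, gapRow, det_fin_two, hM, add_comm]

lemma gapMinor_consCol_of_eq_zero {z : ℕ → R} {d : ℕ} (hz : ∀ i, d < i → z i = 0) (m : ℕ)
    (M : Matrix ℕ ℕ R) :
    gapMinor (m + 1) 0 d (consCol z M) = z d * gapMinor m 0 (d + 1) M := by
  rw [gapMinor, consCol_submatrix, leadingMinor_consCol_of_col_eq_zero]
  · simp [gapMinor, gapRow_zero_left, Function.comp_def, add_assoc, add_comm 1]
  · intro i
    exact hz _ (by simp only [gapRow_zero_left]; omega)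

lemma gapMinor_consCol_add_smul (m q d : ℕ) (z w : ℕ → R) (c : R) (M : Matrix ℕ ℕ R) :
    gapMinor (m + 1) q d (consCol (z + c • w) M) =
      gapMinor (m + 1) q d (consCol z M) + c * gapMinor (m + 1) q d (consCol w M) := by
  simp only [gapMinor, consCol_submatrix]
  exact leadingMinor_consCol_add_smul m (z ∘ gapRow q d) (w ∘ gapRow q d) c _

lemma gapMinor_consCol_swap (m q d : ℕ) (x y : ℕ → R) (M : Matrix ℕ ℕ R) :
    gapMinor (m + 2) q d (consCol x (consCol y M)) =
      -gapMinor (m + 2) q d (consCol y (consCol x M)) := by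
  simp only [gapMinor, consCol_submatrix]
  exact leadingMinor_consCol_swap m _ _ _

lemma gapMinor_consCol_consCol_add_smul (m q d : ℕ) (x y : ℕ → R) (c : R) (M : Matrix ℕ ℕ R) :
    gapMinor (m + 2) q d (consCol (y + c • x) (consCol x M)) =
      gapMinor (m + 2) q d (consCol y (consCol x M)) := by
  simp only [gapMinor, consCol_submatrix]
  exact leadingMinor_consCol_consCol_add_smul m (x ∘ gapRow q d) (y ∘ gapRow q d) c _

end GapMinor

section CornerMinors

lemma eq_of_cornerMinor_consCol_eq {R : Type*} [CommRing R] [NoZeroDivisors R] {K : ℕ}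
    {x x' : ℕ → R} {M : Matrix ℕ ℕ R} (hK : ∀ i, K ≤ i → x i = x' i)
    (heq : ∀ m d, m + 1 + d = K →
      gapMinor (m + 1) 0 d (consCol x M) = gapMinor (m + 1) 0 d (consCol x' M))
    (hne : ∀ m d, m + 1 + d = K → gapMinor m 0 (d + 1) M ≠ 0) :
    x = x' := by
  suffices hfrom : ∀ i, 0 ≤ i → x i = x' i from funext fun i => hfrom i i.zero_le
  refine Nat.decreasingInduction (motive := fun d _ => ∀ i, d ≤ i → x i = x' i)
    (fun d hdK ih => ?_) hK K.zero_le
  obtain ⟨m, rfl⟩ := Nat.exists_eq_add_of_lt hdK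
  have hdiff : gapMinor (m + 1) 0 d (consCol (x - x') M) = 0 := by
    rw [sub_eq_add_neg, ← neg_one_smul R x', gapMinor_consCol_add_smul, heq m d (by omega),
      neg_one_mul, add_neg_cancel]
  have hzero : ∀ i, d < i → (x - x') i = 0 := fun i hi => sub_eq_zero.2 (ih i hi)
  rw [gapMinor_consCol_of_eq_zero hzero] at hdiff
  have hxd : x d = x' d :=
    sub_eq_zero.1 ((mul_eq_zero.1 hdiff).resolve_right (hne m d (by omega)))
  intro i hi
  rcases hi.eq_or_lt with rfl | hlt
  · exact hxd
  · exact ih i hlt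

variable {F : Type*} [Field F]

lemma exists_eq_add_smul_of_cornerMinor_eq {K : ℕ} {x y y' : ℕ → F} {M : Matrix ℕ ℕ F}
    (hx : ∀ i, K ≤ i → x i = 0) (hK : ∀ i, K ≤ i → y i = y' i)
    (heq : ∀ m d, m + 2 + d = K → gapMinor (m + 2) 0 d (consCol x (consCol y M)) =
      gapMinor (m + 2) 0 d (consCol x (consCol y' M)))
    (hne : ∀ m d, m + 1 + d = K → gapMinor (m + 1) 0 d (consCol x M) ≠ 0) :
    ∃ c : F, y' = y + c • x := by
  have hlast : ∀ d, 1 + d = K → x d ≠ 0 := fun d hd => by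
    simpa only [zero_add, gapMinor_one_zero, consCol_apply_zero] using hne 0 d (by omega)
  -- The multiple is chosen so that the corner minors of size one agree as well.
  refine ⟨(y' (K - 1) - y (K - 1)) / x (K - 1),
    eq_of_cornerMinor_consCol_eq (M := consCol x M) (K := K) ?_ ?_ ?_⟩
  · intro i hi
    simp [hK i hi, hx i hi]
  · rintro (_ | m) d hd
    · obtain rfl : d = K - 1 := by omega
      have hne := hlast (K - 1) (by omega)
      simp [gapMinor_one_zero, hne]
    · rw [gapMinor_consCol_consCol_add_smul, gapMinor_consCol_swap, ← heq m d (by omega),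
        gapMinor_consCol_swap, neg_neg]
  · rintro (_ | m) d hd
    · simp [gapMinor]
    · exact hne m (d + 1) (by omega)

lemma eq_of_cornerMinor_consCol_consCol_eq {K : ℕ} {x y y' : ℕ → F} {M : Matrix ℕ ℕ F}
    (hx : ∀ i, K ≤ i → x i = 0) (hK : ∀ i, K ≤ i → y i = y' i)
    (heq : ∀ m d, m + 2 + d = K → gapMinor (m + 2) 0 d (consCol x (consCol y M)) =
      gapMinor (m + 2) 0 d (consCol x (consCol y' M)))
    (htop : gapMinor K 0 0 (consCol y M) = gapMinor K 0 0 (consCol y' M))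
    (hne : ∀ m d, m + 1 + d = K → gapMinor (m + 1) 0 d (consCol x M) ≠ 0) :
    y = y' := by
  cases K with
  | zero => exact funext fun i => hK i i.zero_le
  | succ K =>
    obtain ⟨c, rfl⟩ := exists_eq_add_smul_of_cornerMinor_eq hx hK heq hne
    rw [gapMinor_consCol_add_smul, left_eq_add, mul_eq_zero] at htop
    simp [htop.resolve_right (hne K 0 rfl)]

end CornerMinors

section SchurComplement

variable {F : Type*} [Field F]

/-- An alternating `n × n` matrix, extended by zero to all of `ℕ`. -/
structure IsAlternatingOfSize (n : ℕ) (A : Matrix ℕ ℕ F) : Prop where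
  skew : ∀ i j, A i j = -A j i
  diag : ∀ i, A i i = 0
  support : ∀ i j, n ≤ i → A i j = 0

/-- The columns of `A` from the third on, after subtracting the combination of the first two
columns that clears their entries in the first two rows. For alternating `A` the pivot block is
`!![0, a; -a, 0]` with `a = A 0 1`, which is where the formula comes from. -/
def clearedColumns (A : Matrix ℕ ℕ F) : Matrix ℕ ℕ F :=
  of fun i j => A i (j + 2) + (A i 0 * A 1 (j + 2) - A i 1 * A 0 (j + 2)) / A 0 1

/-- The Schur complement of the leading `2 × 2` block of an alternating matrix. -/
def schurComplement (A : Matrix ℕ ℕ F) : Matrix ℕ ℕ F :=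
  (clearedColumns A).submatrix (· + 2) id

lemma schurComplement_apply (A : Matrix ℕ ℕ F) (i j : ℕ) :
    schurComplement A i j = A (i + 2) (j + 2) +
      (A (i + 2) 0 * A 1 (j + 2) - A (i + 2) 1 * A 0 (j + 2)) / A 0 1 := rfl

lemma gapMinor_eq_clearedColumns (m q d : ℕ) (A : Matrix ℕ ℕ F) :
    gapMinor m q d A =
      gapMinor m q d (consCol (A · 0) (consCol (A · 1) (clearedColumns A))) := by
  have hA : A.submatrix (gapRow q d) id = consCol ((A · 0) ∘ gapRow q d)
      (consCol ((A · 1) ∘ gapRow q d) ((clearedColumns A).submatrix (gapRow q d) id +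
        vecMulVec ((A · 0) ∘ gapRow q d) (fun j => -(A 1 (j + 2) / A 0 1)) +
        vecMulVec ((A · 1) ∘ gapRow q d) (fun j => A 0 (j + 2) / A 0 1))) := by
    ext i (_ | _ | j)
    · simp
    · simp
    · simp only [consCol_apply_succ, Matrix.add_apply, vecMulVec_apply, submatrix_apply, id_eq,
        Function.comp_apply, clearedColumns, of_apply]
      ring
  rw [gapMinor, hA, leadingMinor_consCol_consCol_add_vecMulVec, gapMinor, consCol_submatrix,
    consCol_submatrix]

lemma gapMinor_zero_add_two (m d : ℕ) (A : Matrix ℕ ℕ F) :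
    gapMinor m 0 (d + 2) A = gapMinor m 0 d
      (consCol (fun i => A (i + 2) 0) (consCol (fun i => A (i + 2) 1) (schurComplement A))) := by
  rw [gapMinor_eq_clearedColumns]
  simp [gapMinor, gapRow_zero_left, schurComplement, Function.comp_def, add_assoc]

lemma isAlternatingOfSize_schurComplement {n : ℕ} {A : Matrix ℕ ℕ F}
    (hA : IsAlternatingOfSize (n + 2) A) :
    IsAlternatingOfSize n (schurComplement A) where
  skew i j := by
    rw [schurComplement_apply, schurComplement_apply, hA.skew (j + 2) (i + 2),
      hA.skew (j + 2) 0, hA.skew (j + 2) 1, hA.skew 1 (i + 2), hA.skew 0 (i + 2)]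
    ring
  diag i := by
    rw [schurComplement_apply, hA.diag, hA.skew 1, hA.skew 0 (i + 2)]
    ring
  support i j hi := by
    have hrow := fun k => hA.support (i + 2) k (by omega)
    simp [schurComplement_apply, hrow]

namespace IsAlternatingOfSize

variable {n : ℕ} {A B : Matrix ℕ ℕ F}

lemma ext_of_lt (hA : IsAlternatingOfSize n A) (hB : IsAlternatingOfSize n B)
    (h : ∀ i j, j < i → i < n → A i j = B i j) : A = B := by
  have hlower : ∀ i j, j < i → A i j = B i j := fun i j hji => by
    by_cases hi : i < n
    · exact h i j hji hi
    · rw [hA.support i j (not_lt.1 hi), hB.support i j (not_lt.1 hi)]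
  ext i j
  rcases lt_trichotomy j i with hji | rfl | hij
  · exact hlower i j hji
  · rw [hA.diag, hB.diag]
  · rw [hA.skew, hB.skew, hlower j i hij]

lemma ext_of_schurComplement (hA : IsAlternatingOfSize n A) (hB : IsAlternatingOfSize n B)
    (hpivot : A 0 1 = B 0 1) (hfirst : ∀ i, A (i + 2) 0 = B (i + 2) 0)
    (hsecond : ∀ i, A (i + 2) 1 = B (i + 2) 1)
    (hschur : schurComplement A = schurComplement B) : A = B := by
  refine hA.ext_of_lt hB fun i j hji _ => ?_
  match i, j, hji with
  | 1, 0, _ => rw [hA.skew, hB.skew, hpivot]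
  | i + 2, 0, _ => exact hfirst i
  | i + 2, 1, _ => exact hsecond i
  | i + 2, j + 2, _ =>
    have h := congrFun₂ hschur i j
    rw [schurComplement_apply, schurComplement_apply, hA.skew 1, hB.skew 1, hA.skew 0 (j + 2),
      hB.skew 0 (j + 2), hfirst, hfirst, hsecond, hsecond, hpivot] at h
    exact add_right_cancel h

lemma clearedColumns_row_zero (hA : IsAlternatingOfSize n A) (hpivot : A 0 1 ≠ 0) (j : ℕ) :
    clearedColumns A 0 j = 0 := by
  simp [clearedColumns, hA.diag, hpivot, neg_div]

lemma clearedColumns_row_one (hA : IsAlternatingOfSize n A) (hpivot : A 0 1 ≠ 0) (j : ℕ) :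
    clearedColumns A 1 j = 0 := by
  simp [clearedColumns, hA.diag, hA.skew 1 0, hpivot, neg_div]

lemma gapMinor_add_two (hA : IsAlternatingOfSize n A) (hpivot : A 0 1 ≠ 0) (m q d : ℕ) :
    gapMinor (m + 2) (q + 2) d A =
      A 0 1 ^ 2 * gapMinor m q d (schurComplement A) := by
  rw [gapMinor_eq_clearedColumns, gapMinor_consCol_swap, gapMinor, consCol_submatrix,
    consCol_submatrix, leadingMinor_consCol_of_row_eq_zero, consCol_submatrix,
    leadingMinor_consCol_of_row_eq_zero]
  · simp only [gapMinor, schurComplement, Function.comp_def, id_eq, gapRow_succ_zero,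
      gapRow_succ_succ, zero_add, submatrix_submatrix, hA.skew 1 0]
    ring
  · simp [gapRow_succ_zero, gapRow_succ_succ, hA.clearedColumns_row_one hpivot]
  · rintro (_ | j) <;> simp [gapRow_succ_zero, hA.diag, hA.clearedColumns_row_zero hpivot]

lemma gapMinor_one_succ (hA : IsAlternatingOfSize n A) (hpivot : A 0 1 ≠ 0) (m d : ℕ) :
    gapMinor (m + 2) 1 (d + 1) A =
      -A 0 1 * gapMinor (m + 1) 0 d
        (consCol (fun i => A (i + 2) 0) (schurComplement A)) := by
  rw [gapMinor_eq_clearedColumns, gapMinor_consCol_swap, gapMinor, consCol_submatrix,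
    leadingMinor_consCol_of_row_eq_zero]
  · simp [gapMinor, schurComplement, Function.comp_def, gapRow_succ_zero, gapRow_succ_succ,
      gapRow_zero_left, add_assoc]
  · rintro (_ | j) <;> simp [gapRow_succ_zero, hA.diag, hA.clearedColumns_row_zero hpivot]

lemma gapMinor_zero_one (hA : IsAlternatingOfSize n A) (hpivot : A 0 1 ≠ 0) (m : ℕ) :
    gapMinor (m + 1) 0 1 A =
      -A 0 1 * gapMinor m 0 0
        (consCol (fun i => A (i + 2) 1) (schurComplement A)) := by
  rw [gapMinor_eq_clearedColumns, gapMinor, consCol_submatrix,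
    leadingMinor_consCol_of_row_eq_zero]
  · simp [gapMinor, schurComplement, Function.comp_def, gapRow_zero_left, add_assoc,
      hA.skew 1 0]
  · rintro (_ | j) <;> simp [gapRow_zero_left, hA.diag, hA.clearedColumns_row_one hpivot]

end IsAlternatingOfSize

end SchurComplement

section Uniqueness

variable {F : Type*} [Field F] {n : ℕ} {A B : Matrix ℕ ℕ F}

namespace IsAlternatingOfSize

lemma pivot_eq (hA : IsAlternatingOfSize n A) (hB : IsAlternatingOfSize n B) {d : ℕ}
    (hone : gapMinor 1 0 (d + 1) A = gapMinor 1 0 (d + 1) B)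
    (htwo : gapMinor 2 1 d A = gapMinor 2 1 d B) (hne : gapMinor 2 1 d A ≠ 0) :
    A 0 1 = B 0 1 := by
  rw [gapMinor_one_zero, gapMinor_one_zero] at hone
  rw [gapMinor_two_one (hA.diag 0)] at htwo hne
  rw [gapMinor_two_one (hB.diag 0), ← hone, neg_inj] at htwo
  exact mul_right_cancel₀ (right_ne_zero_of_mul (neg_ne_zero.1 hne)) htwo

lemma gapMinor_schurComplement_eq (hA : IsAlternatingOfSize n A) (hB : IsAlternatingOfSize n B)
    (hpivot : A 0 1 ≠ 0) (hAB : A 0 1 = B 0 1) {m q d : ℕ}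
    (heq : gapMinor (m + 2) (q + 2) d A = gapMinor (m + 2) (q + 2) d B) :
    gapMinor m q d (schurComplement A) = gapMinor m q d (schurComplement B) := by
  rw [hA.gapMinor_add_two hpivot, hB.gapMinor_add_two (hAB ▸ hpivot), ← hAB] at heq
  exact mul_left_cancel₀ (pow_ne_zero 2 hpivot) heq

lemma gapMinor_schurComplement_ne_zero (hA : IsAlternatingOfSize n A) (hpivot : A 0 1 ≠ 0)
    {m q d : ℕ} (hne : gapMinor (m + 2) (q + 2) d A ≠ 0) :
    gapMinor m q d (schurComplement A) ≠ 0 := by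
  rw [hA.gapMinor_add_two hpivot] at hne
  exact right_ne_zero_of_mul hne

lemma firstCol_eq (hA : IsAlternatingOfSize (n + 2) A) (hB : IsAlternatingOfSize (n + 2) B)
    (hpivot : A 0 1 ≠ 0) (hAB : A 0 1 = B 0 1) (hschur : schurComplement A = schurComplement B)
    (heq : ∀ m d, m + 1 + d = n → gapMinor (m + 2) 1 (d + 1) A = gapMinor (m + 2) 1 (d + 1) B)
    (hne : ∀ m d, m + 2 + d = n → gapMinor (m + 3) 2 (d + 1) A ≠ 0) :
    (fun i => A (i + 2) 0) = fun i => B (i + 2) 0 := by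
  refine eq_of_cornerMinor_consCol_eq (K := n) (M := schurComplement A) ?_ ?_ ?_
  · intro i hi
    rw [hA.support _ _ (by omega), hB.support _ _ (by omega)]
  · intro m d hmd
    have h := heq m d hmd
    rw [hA.gapMinor_one_succ hpivot, hB.gapMinor_one_succ (hAB ▸ hpivot), ← hAB, ← hschur] at h
    exact mul_left_cancel₀ (neg_ne_zero.2 hpivot) h
  · rintro (_ | m) d hmd
    · simp [gapMinor]
    · exact hA.gapMinor_schurComplement_ne_zero hpivot (hne m d (by omega))

lemma secondCol_eq (hA : IsAlternatingOfSize (n + 2) A) (hB : IsAlternatingOfSize (n + 2) B)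
    (hpivot : A 0 1 ≠ 0) (hAB : A 0 1 = B 0 1) (hschur : schurComplement A = schurComplement B)
    (hfirst : (fun i => A (i + 2) 0) = fun i => B (i + 2) 0)
    (heq : ∀ m d, m + 1 + d = n + 1 → gapMinor (m + 1) 0 (d + 1) A = gapMinor (m + 1) 0 (d + 1) B)
    (hne : ∀ m d, m + 1 + d = n → gapMinor (m + 2) 1 (d + 1) A ≠ 0) :
    (fun i => A (i + 2) 1) = fun i => B (i + 2) 1 := by
  refine eq_of_cornerMinor_consCol_consCol_eq (K := n) (x := fun i => A (i + 2) 0)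
    (M := schurComplement A) ?_ ?_ ?_ ?_ ?_
  · intro i hi
    exact hA.support _ _ (by omega)
  · intro i hi
    rw [hA.support _ _ (by omega), hB.support _ _ (by omega)]
  · intro m d hmd
    have h := heq (m + 1) (d + 1) (by omega)
    rwa [gapMinor_zero_add_two, gapMinor_zero_add_two, ← hfirst, ← hschur] at h
  · have h := heq n 0 rfl
    rw [hA.gapMinor_zero_one hpivot, hB.gapMinor_zero_one (hAB ▸ hpivot), ← hAB, ← hschur] at h
    exact mul_left_cancel₀ (neg_ne_zero.2 hpivot) h
  · intro m d hmd
    have h := hne m d hmd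
    rw [hA.gapMinor_one_succ hpivot] at h
    exact right_ne_zero_of_mul h

lemma eq_of_size_le_two (hA : IsAlternatingOfSize n A) (hB : IsAlternatingOfSize n B)
    (hn : n ≤ 2) (heq : n = 2 → A 1 0 = B 1 0) : A = B := by
  refine hA.ext_of_lt hB fun i j hji hi => ?_
  obtain ⟨rfl, rfl⟩ : i = 1 ∧ j = 0 := by omega
  exact heq (by omega)

theorem eq_of_gapMinor_eq (hA : IsAlternatingOfSize n A) (hB : IsAlternatingOfSize n B)
    (heq : ∀ m q d, q < m → 0 < d → m + d = n → gapMinor m q d A = gapMinor m q d B)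
    (hne : ∀ m q d, 0 < q → q < m → 0 < d → m + d = n → gapMinor m q d A ≠ 0) :
    A = B := by
  induction n using Nat.strong_induction_on generalizing A B with
  | _ n ih =>
  obtain hn | ⟨n, rfl⟩ : n ≤ 2 ∨ ∃ k, n = k + 3 :=
    (le_or_gt n 2).imp_right fun h => ⟨n - 3, by omega⟩
  · refine hA.eq_of_size_le_two hB hn ?_
    rintro rfl
    simpa only [gapMinor_one_zero] using heq 1 0 1 one_pos one_pos rfl
  have hcorner : gapMinor 2 1 (n + 1) A ≠ 0 :=
    hne _ _ _ one_pos one_lt_two n.succ_pos (by omega)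
  have hpivot : A 0 1 ≠ 0 := by
    rw [gapMinor_two_one (hA.diag 0), neg_ne_zero] at hcorner
    exact left_ne_zero_of_mul hcorner
  have hAB : A 0 1 = B 0 1 := hA.pivot_eq hB
    (heq _ _ _ (by omega) (by omega) (by omega)) (heq _ _ _ (by omega) (by omega) (by omega))
    hcorner
  have hschur : schurComplement A = schurComplement B :=
    ih (n + 1) (by omega) (isAlternatingOfSize_schurComplement hA)
      (isAlternatingOfSize_schurComplement hB)
      (fun m q d _ _ _ => hA.gapMinor_schurComplement_eq hB hpivot hAB
        (heq _ _ _ (by omega) (by omega) (by omega)))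
      (fun m q d _ _ _ _ => hA.gapMinor_schurComplement_ne_zero hpivot
        (hne _ _ _ (by omega) (by omega) (by omega) (by omega)))
  have hfirst : (fun i => A (i + 2) 0) = fun i => B (i + 2) 0 :=
    hA.firstCol_eq hB hpivot hAB hschur
      (fun m d _ => heq _ _ _ (by omega) (by omega) (by omega))
      (fun m d _ => hne _ _ _ (by omega) (by omega) (by omega) (by omega))
  have hsecond : (fun i => A (i + 2) 1) = fun i => B (i + 2) 1 :=
    hA.secondCol_eq hB hpivot hAB hschur hfirst
      (fun m d _ => heq _ _ _ (by omega) (by omega) (by omega))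
      (fun m d _ => hne _ _ _ (by omega) (by omega) (by omega) (by omega))
  exact hA.ext_of_schurComplement hB hAB (congrFun hfirst) (congrFun hsecond) hschur

end IsAlternatingOfSize

end Uniqueness

section FiniteMatrices

variable {F : Type*} [Field F] {n : ℕ}

/-- The extension of a finite square matrix by zero to all of `ℕ`. -/
def extendByZero (A : Matrix (Fin n) (Fin n) F) : Matrix ℕ ℕ F :=
  of fun i j => if h : i < n ∧ j < n then A ⟨i, h.1⟩ ⟨j, h.2⟩ else 0

/-- The minor `M_{j,k}` over an arbitrary field; over `ℝ` it is `Mminor` by definition. -/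
def signedMinor (n j k : ℕ) (A : Matrix (Fin n) (Fin n) F) : F :=
  (-1) ^ (j * k) *
    det (of fun p q : Fin (n - j) =>
      A (if (p : ℕ) < n - k - 1
          then ⟨(p : ℕ), by have := p.isLt; omega⟩
          else ⟨(p : ℕ) + j, by have := p.isLt; omega⟩)
        ⟨(q : ℕ), by have := q.isLt; omega⟩)

lemma extendByZero_apply_fin (A : Matrix (Fin n) (Fin n) F) (i j : Fin n) :
    extendByZero A i j = A i j := by
  simp [extendByZero]

lemma extendByZero_injective :
    Function.Injective (extendByZero : Matrix (Fin n) (Fin n) F → Matrix ℕ ℕ F) := by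
  intro A B hAB
  ext i j
  rw [← extendByZero_apply_fin A, hAB, extendByZero_apply_fin]

lemma isAlternatingOfSize_extendByZero {A : Matrix (Fin n) (Fin n) F} (hskew : Aᵀ = -A)
    (hdiag : ∀ i, A i i = 0) : IsAlternatingOfSize n (extendByZero A) where
  skew i j := by
    by_cases h : i < n ∧ j < n
    · simpa [extendByZero, h] using congrFun₂ hskew ⟨j, h.2⟩ ⟨i, h.1⟩
    · simp [extendByZero, h, and_comm]
  diag i := by simp [extendByZero, hdiag]
  support i j hi := by simp [extendByZero, hi.not_gt]

lemma signedMinor_eq_gapMinor_extendByZero {m q d : ℕ} (hqm : q < m) (hmd : m + d = n)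
    (A : Matrix (Fin n) (Fin n) F) :
    signedMinor n d (n - 1 - q) A =
      (-1) ^ (d * (n - 1 - q)) * gapMinor m q d (extendByZero A) := by
  obtain rfl : m = n - d := by omega
  have hq : n - (n - 1 - q) - 1 = q := by omega
  rw [signedMinor, gapMinor, leadingMinor]
  congr 2
  ext i j
  simp only [of_apply, submatrix_apply, id_eq, extendByZero, gapRow, hq]
  split_ifs with hi hlt hlt
  · rfl
  · omega
  · rfl
  · omega

theorem Mminor_determine_matrix_general {A B : Matrix (Fin n) (Fin n) F}
    (hA : Aᵀ = -A) (hA₀ : ∀ i, A i i = 0) (hB : Bᵀ = -B) (hB₀ : ∀ i, B i i = 0)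
    (heq : ∀ j k, 1 ≤ j → j ≤ k → k ≤ n - 1 → signedMinor n j k A = signedMinor n j k B)
    (hne : ∀ j k, 1 ≤ j → j ≤ k → k < n - 1 → signedMinor n j k A ≠ 0) :
    A = B := by
  apply extendByZero_injective
  refine (isAlternatingOfSize_extendByZero hA hA₀).eq_of_gapMinor_eq
    (isAlternatingOfSize_extendByZero hB hB₀) ?_ ?_
  · intro m q d hqm hd hmd
    have h := heq d (n - 1 - q) hd (by omega) (by omega)
    rw [signedMinor_eq_gapMinor_extendByZero hqm hmd,
      signedMinor_eq_gapMinor_extendByZero hqm hmd] at h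
    exact mul_left_cancel₀ (pow_ne_zero _ (neg_ne_zero.2 one_ne_zero)) h
  · intro m q d hq hqm hd hmd
    have h := hne d (n - 1 - q) hd (by omega) (by omega)
    rw [signedMinor_eq_gapMinor_extendByZero hqm hmd] at h
    exact right_ne_zero_of_mul h

end FiniteMatrices

/-- Two skew-symmetric matrices with equal and nonzero minors `M_{j,k}`
are equal. -/
theorem Mminor_determine_matrix (n : ℕ) (hn : 2 ≤ n)
    (A B : Matrix (Fin n) (Fin n) ℝ) (hA : Aᵀ = -A) (hB : Bᵀ = -B)
    (heq : ∀ j k : ℕ, 1 ≤ j → j ≤ k → k ≤ n - 1 → Mminor n j k A = Mminor n j k B)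
    (hne : ∀ j k : ℕ, 1 ≤ j → j ≤ k → k ≤ n - 1 → Mminor n j k A ≠ 0) :
    A = B :=
  Mminor_determine_matrix_general hA (fun i => self_eq_neg.1 (congrFun₂ hA i i)) hB
    (fun i => self_eq_neg.1 (congrFun₂ hB i i)) heq fun j k hj hjk hk => hne j k hj hjk hk.le
end
end
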